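/- Let D be a nonempty finite set, δ ∈ (0,1), and (π_t)_{t≥1} positive reals with ∑_{t≥1} 1/π_t = 1. For each t ≥ 1 and x ∈ D, let Y_{t,x} be a real random variable with the Gaussian distribution of mean μ_{t−1}(x) and standard deviation σ_{t−1}(x) > 0, and set β_t = 2·log(|D|·π_t/δ). Then the probability that |Y_{t,x} − μ_{t−1}(x)| ≤ β_t^{1/2}·σ_{t−1}(x) holds simultaneously for all x ∈ D and all t ≥ 1 is at least 1 − δ. -/

import Mathlib

/-!
The constant in front of the two-sided Gaussian tail bound must be `1`, whereas the Chernoff bound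
gives `2`. The sharp constant comes from translating the half-line `(c, ∞)` to `(0, ∞)`:
for `y > 0` and `c ≥ 0` one has `(y + c)² ≥ y² + c²`, so the density of `N(-c, v)` at `y` is at most
`exp (-c² / (2v))` times that of `N(0, v)`. Hence `Pr(Z > c) ≤ exp (-c² / (2v)) * Pr(Z > 0)`, and
adding the mirror image gives `Pr(|Z| > c) ≤ exp (-c² / (2v))` (`gaussianReal_abs_tail`).

With `c = √β_t σ` the tail is at most `exp (-β_t / 2) = δ / (|D| π_t)`, and these numbers sum to `δ`
over `x ∈ D` and `t ≥ 1`, so a union bound concludes.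
-/

open MeasureTheory ProbabilityTheory
open scoped NNReal ENNReal

lemma gaussianReal_Ioi_le {v : ℝ≥0} (hv : v ≠ 0) {c : ℝ} (hc : 0 ≤ c) :
    gaussianReal 0 v (Set.Ioi c) ≤
      ENNReal.ofReal (Real.exp (-c ^ 2 / (2 * v))) * gaussianReal 0 v (Set.Ioi 0) := by
  have hshift : gaussianReal 0 v (Set.Ioi c) = gaussianReal (-c) v (Set.Ioi 0) := by
    have h := gaussianReal_map_sub_const (μ := 0) (v := v) c
    rw [zero_sub] at h
    rw [← h, Measure.map_apply (by fun_prop) measurableSet_Ioi]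
    congr 1
    ext y
    simp
  rw [hshift, gaussianReal_apply _ hv, gaussianReal_apply _ hv,
    ← lintegral_const_mul _ (measurable_gaussianPDF _ _)]
  refine setLIntegral_mono ((measurable_gaussianPDF _ _).const_mul _) fun y hy => ?_
  have hy : 0 < y := hy
  rw [gaussianPDF, gaussianPDF, ← ENNReal.ofReal_mul (Real.exp_nonneg _)]
  apply ENNReal.ofReal_le_ofReal
  rw [gaussianPDFReal, gaussianPDFReal, mul_left_comm, ← Real.exp_add]
  gcongr
  have hv' : (0 : ℝ) < v := by positivity
  rw [← add_div]
  gcongr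
  nlinarith [mul_nonneg hc hy.le]

/-- Two-sided Gaussian tail bound with the sharp constant `1`. -/
lemma gaussianReal_abs_tail {v : ℝ≥0} (hv : v ≠ 0) {c : ℝ} (hc : 0 ≤ c) :
    gaussianReal 0 v {y | c < |y|} ≤ ENNReal.ofReal (Real.exp (-c ^ 2 / (2 * v))) := by
  have hneg : ∀ a : ℝ, gaussianReal 0 v (Set.Iio (-a)) = gaussianReal 0 v (Set.Ioi a) := by
    intro a
    have h := gaussianReal_map_neg (μ := 0) (v := v)
    rw [neg_zero] at h
    conv_rhs => rw [← h]
    rw [Measure.map_apply (by fun_prop) measurableSet_Ioi]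
    congr 1
    ext y
    simp
  have hset : {y : ℝ | c < |y|} ⊆ Set.Ioi c ∪ Set.Iio (-c) := by
    intro y hy
    rw [Set.mem_ofPred_eq, lt_abs] at hy
    rcases hy with h | h
    · exact Or.inl h
    · exact Or.inr (by simpa [lt_neg] using h)
  have hhalf : gaussianReal 0 v (Set.Ioi 0) + gaussianReal 0 v (Set.Ioi 0) ≤ 1 := by
    nth_rewrite 2 [← hneg 0]
    rw [neg_zero, ← measure_union _ measurableSet_Iio]
    · exact prob_le_one
    · exact Set.disjoint_left.2 fun y hy hy' => lt_asymm (Set.mem_Ioi.1 hy) (Set.mem_Iio.1 hy')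
  calc gaussianReal 0 v {y | c < |y|}
      ≤ gaussianReal 0 v (Set.Ioi c) + gaussianReal 0 v (Set.Iio (-c)) :=
        (measure_mono hset).trans (measure_union_le _ _)
    _ = gaussianReal 0 v (Set.Ioi c) + gaussianReal 0 v (Set.Ioi c) := by rw [hneg]
    _ ≤ ENNReal.ofReal (Real.exp (-c ^ 2 / (2 * v))) *
          (gaussianReal 0 v (Set.Ioi 0) + gaussianReal 0 v (Set.Ioi 0)) := by
        rw [mul_add]
        exact add_le_add (gaussianReal_Ioi_le hv hc) (gaussianReal_Ioi_le hv hc)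
    _ ≤ ENNReal.ofReal (Real.exp (-c ^ 2 / (2 * v))) := mul_le_of_le_one_right' hhalf

/-- The bound also holds for `b < 0`, where `√b = 0` and the right-hand side exceeds `1`. -/
lemma measure_abs_sub_mean_gt_le {Ω : Type*} [MeasurableSpace Ω] {P : Measure Ω}
    {X : Ω → ℝ} (hX : Measurable X) {m s : ℝ} (hs : 0 < s)
    (hlaw : P.map X = gaussianReal m (Real.toNNReal (s ^ 2))) (b : ℝ) :
    P {ω | Real.sqrt b * s < |X ω - m|} ≤ ENNReal.ofReal (Real.exp (-(b / 2))) := by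
  have hs2 : (0 : ℝ) < s ^ 2 := by positivity
  have hv : Real.toNNReal (s ^ 2) ≠ 0 := (Real.toNNReal_pos.2 hs2).ne'
  have hlaw' : P.map (fun ω => X ω - m) = gaussianReal 0 (Real.toNNReal (s ^ 2)) := by
    have h := gaussianReal_map_sub_const (μ := m) (v := Real.toNNReal (s ^ 2)) m
    rw [sub_self, ← hlaw, Measure.map_map (by fun_prop) hX] at h
    exact h
  have hmeas : MeasurableSet {y : ℝ | Real.sqrt b * s < |y|} :=
    measurableSet_lt measurable_const (by fun_prop)
  have htail := gaussianReal_abs_tail hv (mul_nonneg (Real.sqrt_nonneg b) hs.le)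
  rw [← hlaw', Measure.map_apply (by fun_prop) hmeas] at htail
  refine htail.trans (ENNReal.ofReal_le_ofReal (Real.exp_le_exp.2 ?_))
  have hb : b ≤ Real.sqrt b ^ 2 := by
    rcases le_total 0 b with h | h
    · rw [Real.sq_sqrt h]
    · exact h.trans (sq_nonneg _)
  rw [Real.coe_toNNReal _ hs2.le, mul_pow]
  have : -(Real.sqrt b ^ 2 * s ^ 2) / (2 * s ^ 2) = -(Real.sqrt b ^ 2 / 2) := by
    field_simp
  rw [this]
  linarith

/-- Gaussian tail plus union-bound lemma (Lemma 5.1 of Srinivas et al.): if each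
`Y_{t,x}` is Gaussian with mean `μ_{t−1}(x)` and standard deviation `σ_{t−1}(x) > 0`,
and `β_t = 2·log(|D|·π_t/δ)` with `∑_{t≥1} 1/π_t = 1`, then with probability at least
`1 − δ` the confidence bounds hold simultaneously for all `x ∈ D` and all `t ≥ 1`. -/
theorem stmt_8 {D : Type*} [Fintype D] [Nonempty D]
    {Ω : Type*} [MeasurableSpace Ω] (P : Measure Ω) [IsProbabilityMeasure P]
    (δ : ℝ) (hδ : δ ∈ Set.Ioo (0 : ℝ) 1)
    (πt : ℕ → ℝ) (hπpos : ∀ t, 1 ≤ t → 0 < πt t)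
    (hπsum : ∑' t : ℕ, 1 / πt (t + 1) = 1)
    (Y : ℕ → D → Ω → ℝ) (μprev σprev : ℕ → D → ℝ)
    (hσpos : ∀ t, 1 ≤ t → ∀ x, 0 < σprev t x)
    (hYm : ∀ t, 1 ≤ t → ∀ x, Measurable (Y t x))
    (hYlaw : ∀ t, 1 ≤ t → ∀ x,
      P.map (Y t x) = gaussianReal (μprev t x) (Real.toNNReal ((σprev t x) ^ 2)))
    (β : ℕ → ℝ)
    (hβ : ∀ t, 1 ≤ t → β t = 2 * Real.log ((Fintype.card D) * πt t / δ)) :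
    ENNReal.ofReal (1 - δ) ≤
      P {ω | ∀ x : D, ∀ t : ℕ, 1 ≤ t →
        |Y t x ω - μprev t x| ≤ Real.sqrt (β t) * σprev t x} := by
  obtain ⟨hδ0, hδ1⟩ := hδ
  have hcard : (0 : ℝ) < Fintype.card D := by exact_mod_cast Fintype.card_pos
  -- A non-summable series would have the junk value `0`, contradicting `hπsum`.
  have hsummable : Summable fun t : ℕ => 1 / πt (t + 1) := by
    by_contra h
    rw [tsum_eq_zero_of_not_summable h] at hπsum
    exact zero_ne_one hπsum
  have htail : ∀ (x : D) (t : ℕ),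
      P {ω | Real.sqrt (β (t + 1)) * σprev (t + 1) x < |Y (t + 1) x ω - μprev (t + 1) x|} ≤
        ENNReal.ofReal (δ / Fintype.card D * (1 / πt (t + 1))) := by
    intro x t
    have ht : 1 ≤ t + 1 := Nat.le_add_left 1 t
    have hπ := hπpos (t + 1) ht
    refine (measure_abs_sub_mean_gt_le (hYm _ ht x) (hσpos _ ht x) (hYlaw _ ht x) _).trans ?_
    apply ENNReal.ofReal_le_ofReal
    rw [hβ _ ht, mul_div_cancel_left₀ _ two_ne_zero, Real.exp_neg, Real.exp_log (by positivity)]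
    apply le_of_eq
    field_simp
  set S := {ω | ∀ x : D, ∀ t : ℕ, 1 ≤ t →
        |Y t x ω - μprev t x| ≤ Real.sqrt (β t) * σprev t x} with hS
  have hsub : Sᶜ ⊆ ⋃ x : D, ⋃ t : ℕ,
      {ω | Real.sqrt (β (t + 1)) * σprev (t + 1) x < |Y (t + 1) x ω - μprev (t + 1) x|} := by
    intro ω hω
    simp only [hS, Set.mem_compl_iff, Set.mem_ofPred_eq, not_forall, not_le] at hω
    obtain ⟨x, t, ht, h⟩ := hω
    obtain ⟨k, rfl⟩ := Nat.exists_eq_add_of_le' ht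
    exact Set.mem_iUnion₂.2 ⟨x, k, h⟩
  have hbad : P Sᶜ ≤ ENNReal.ofReal δ := by
    calc P Sᶜ ≤ ∑ x : D, ∑' t : ℕ, ENNReal.ofReal (δ / Fintype.card D * (1 / πt (t + 1))) := by
          refine (measure_mono hsub).trans ((measure_iUnion_fintype_le _ _).trans ?_)
          refine Finset.sum_le_sum fun x _ => (measure_iUnion_le _).trans ?_
          exact ENNReal.tsum_le_tsum (htail x)
      _ = ∑ x : D, ENNReal.ofReal (δ / Fintype.card D) := by
          rw [← ENNReal.ofReal_tsum_of_nonneg _ (hsummable.mul_left _), tsum_mul_left, hπsum,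
            mul_one]
          intro t
          have := hπpos (t + 1) (Nat.le_add_left 1 t)
          positivity
      _ = ENNReal.ofReal δ := by
          rw [← ENNReal.ofReal_sum_of_nonneg fun _ _ => by positivity]
          congr 1
          rw [Finset.sum_const, Finset.card_univ, nsmul_eq_mul]
          field_simp
  rw [ENNReal.ofReal_sub _ hδ0.le, ENNReal.ofReal_one, tsub_le_iff_right]
  -- Subadditivity is enough here, so measurability of `S` plays no role.
  calc (1 : ℝ≥0∞) = P (S ∪ Sᶜ) := by rw [Set.union_compl_self, measure_univ]
    _ ≤ P S + P Sᶜ := measure_union_le _ _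
    _ ≤ P S + ENNReal.ofReal δ := by gcongr
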